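/- In the field ℚ(t) of rational functions, Δ_{2,3,3,4}(t) = P(t)·Or_{2,3,3,4}(t), where P(t) = (1−t⁶)(1−t⁷)/((1−t²)(1−t⁴)(1−t³)(1−t³)); equivalently Δ_{2,3,3,4}(t) = (1−t⁶)(1−t⁷)/(1−t)². (This is the identity ∏_{j=1}^{2} ζ̄_{X,j}(t) = P_{X̃₀}(t)·Or_{X̃₀}(t) of the main theorem for the virtual singularity X = M♯_{1,−1}, whose dual series has k=0 element M♯_{1,0} with weight system (2,4,3,3; 6,7) and whose Gabrielov numbers are 2,3;3,4.) -/

import Mathlib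

/-!
The value of `Δ` at `(2, 3, 3, 4)` is a polynomial in `t`, because each `(t ^ m - 1) / (t - 1)` is a
geometric sum, so its closed form (`delta_eq`) is an identity of polynomials. The factorization
through the Poincaré series then follows by cancelling: the weights `2, 4, 3, 3` are a permutation
of the Gabrielov numbers `2, 3, 3, 4`, so the denominator of the Poincaré series is exactly the
product in `Orb`. The factors cancelled are nonzero since `t` is transcendental
(`one_sub_t_pow_ne_zero`).
-/

open Finset

/-- The generator `t` of the field `ℚ(t)` of rational functions. -/
noncomputable def t : RatFunc ℚ := RatFunc.X

/-- `Δ_{γ₁,γ₂,γ₃,γ₄}(t)`, the characteristic polynomial of the Coxeter element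
corresponding to the graph `S_{γ₁,γ₂,γ₃,γ₄}`. -/
noncomputable def Δ (γ : Fin 4 → ℕ) : RatFunc ℚ :=
  (t ^ 3 - 2 * t ^ 2 - 2 * t + 1) * ∏ i, (t ^ γ i - 1) / (t - 1)
    + t ^ 2 * ∑ i, ((t ^ (γ i - 1) - 1) / (t - 1)) *
        ∏ j ∈ univ.erase i, (t ^ γ j - 1) / (t - 1)

/-- `Or_{γ₁,γ₂,γ₃,γ₄}(t) = (1-t)⁻² · ∏ᵢ (1 - t^{γᵢ})`. -/
noncomputable def Orb (γ : Fin 4 → ℕ) : RatFunc ℚ :=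
  ((1 - t) ^ 2)⁻¹ * ∏ i, (1 - t ^ γ i)

lemma one_sub_t_pow_ne_zero {n : ℕ} (hn : n ≠ 0) : (1 : RatFunc ℚ) - t ^ n ≠ 0 := by
  intro h
  have h1 : (Polynomial.X : Polynomial ℚ) ^ n = 1 := by
    apply RatFunc.algebraMap_injective ℚ
    rw [map_pow, RatFunc.algebraMap_X, map_one]
    exact (sub_eq_zero.mp h).symm
  have h2 := congrArg Polynomial.natDegree h1
  rw [Polynomial.natDegree_X_pow, Polynomial.natDegree_one] at h2
  exact hn h2

/-- With every quotient `(t ^ m - 1) / (t - 1)` expanded as a geometric sum, the claimed closed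
form of `Δ` becomes an identity of polynomials. -/
lemma delta_eq : Δ ![2, 3, 3, 4] = (1 - t ^ 6) * (1 - t ^ 7) / (1 - t) ^ 2 := by
  have h1 : (1 : RatFunc ℚ) - t ≠ 0 := by simpa using one_sub_t_pow_ne_zero one_ne_zero
  have h1' : t - 1 ≠ 0 := sub_ne_zero.mpr (sub_ne_zero.mp h1).symm
  have e0 : univ.erase (0 : Fin 4) = {1, 2, 3} := by decide
  have e1 : univ.erase (1 : Fin 4) = {0, 2, 3} := by decide
  have e2 : univ.erase (2 : Fin 4) = {0, 1, 3} := by decide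
  have e3 : univ.erase (3 : Fin 4) = {0, 1, 2} := by decide
  have geom (m : ℕ) : (t ^ m - 1) / (t - 1) = ∑ k ∈ range m, t ^ k :=
    (geom_sum_eq (sub_ne_zero.mp h1') m).symm
  rw [eq_div_iff (pow_ne_zero 2 h1)]
  simp only [Δ, geom, Fin.sum_univ_four, Fin.prod_univ_four, e0, e1, e2, e3]
  simp [sum_range_succ]
  ring

/-- The main theorem for the virtual singularity `M♯_{1,-1}` (Gabrielov numbers
`2,3;3,4`; dual `k=0` element `M♯_{1,0}` with weight system `(2,4,3,3;6,7)`). -/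
theorem stmt_18 :
    Δ ![2, 3, 3, 4]
      = (1 - t ^ 6) * (1 - t ^ 7) /
          ((1 - t ^ 2) * (1 - t ^ 4) * (1 - t ^ 3) * (1 - t ^ 3))
        * Orb ![2, 3, 3, 4]
    ∧ Δ ![2, 3, 3, 4] = (1 - t ^ 6) * (1 - t ^ 7) / (1 - t) ^ 2 := by
  refine ⟨?_, delta_eq⟩
  have h1 : (1 : RatFunc ℚ) - t ≠ 0 := by simpa using one_sub_t_pow_ne_zero one_ne_zero
  have h2 := one_sub_t_pow_ne_zero two_ne_zero
  have h3 := one_sub_t_pow_ne_zero three_ne_zero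
  have h4 := one_sub_t_pow_ne_zero four_ne_zero
  have hOrb : Orb ![2, 3, 3, 4]
      = ((1 - t) ^ 2)⁻¹ * ((1 - t ^ 2) * (1 - t ^ 3) * (1 - t ^ 3) * (1 - t ^ 4)) := by
    simp [Orb, Fin.prod_univ_four]
  rw [delta_eq, hOrb]
  field_simp
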